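/- arXiv:2605.11857 — 2 statements merged into one kernel-verified Lean document; each statement's English description precedes it below -/
import Mathlib

section
/- Let Φ : ℝ^d → ℝ be differentiable with Λ-Lipschitz gradient (Λ > 0) and bounded below, and set Φ* = inf_θ Φ(θ). Fix 0 < η ≤ 1/(4Λ), T ≥ 1, Δ ≥ 0, σ ≥ 0, ζ ≥ 0. On a filtered probability space with filtration (F_t), let θ^0 be deterministic and define θ^{t+1} = θ^t − η g^t for t = 0, …, T−1, where g^t = ∇Φ(θ^t) + b^t + ξ^t, each θ^t and b^t is F_t-measurable, ‖b^t‖ ≤ Δ/2 almost surely, E[ξ^t | F_t] = 0, and E[‖ξ^t‖² | F_t] ≤ σ² + ζ²/4. Then (1/T) ∑_{t=0}^{T−1} E[‖∇Φ(θ^t)‖²] ≤ 4(Φ(θ^0) − Φ*)/(ηT) + 2Λη·(σ² + ζ²/4) + (3/4)·Δ². -/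
open MeasureTheory

/-!
Write `G = ∇Φ(θ)` and let `h = G + b` be the conditional mean of the stochastic gradient `h + ξ`.
Smoothness bounds `Φ(θ - η (h + ξ)) - Φ(θ)` by `-η ⟪G, h + ξ⟫ + (Λ η² / 2) ‖h + ξ‖²`. In
expectation every term linear in `ξ` vanishes, because `G` and `h` are known at time `t`. Since
`Λ η ≤ 1`, the quadratic term in `h` is at most `(η / 2) ‖h‖²`, and the polarization identity
`‖h‖² - 2 ⟪G, h⟫ = ‖b‖² - ‖G‖²` leaves
`E‖G‖² ≤ (2 / η) (E Φ(θ) - E Φ(θ')) + E‖b‖² + Λ η E‖ξ‖²`, where `θ'` is the next iterate.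
Averaging over time telescopes the first term. The constants `4`, `2` and `3 / 4` of the final
bound are thereby improved to `2`, `1` and `1 / 4`.
-/

open Set
open scoped NNReal Gradient RealInnerProductSpace

lemma norm_sub_fderiv_le_of_lipschitzWith_fderiv {E F : Type*}
    [NormedAddCommGroup E] [NormedSpace ℝ E] [NormedAddCommGroup F] [NormedSpace ℝ F]
    {f : E → F} {K : ℝ≥0} (hf : Differentiable ℝ f) (hf' : LipschitzWith K (fderiv ℝ f))
    (x v : E) : ‖f (x + v) - f x - fderiv ℝ f x v‖ ≤ K / 2 * ‖v‖ ^ 2 := by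
  have remainder_deriv (s : ℝ) : HasDerivAt (fun s : ℝ ↦ f (x + s • v) - f x - s • fderiv ℝ f x v)
      (fderiv ℝ f (x + s • v) v - fderiv ℝ f x v) s := by
    have line : HasDerivAt (fun s : ℝ ↦ x + s • v) v s := by
      simpa using ((hasDerivAt_id s).smul_const v).const_add x
    simpa using (((hf _).hasFDerivAt.comp_hasDerivAt s line).sub_const (f x)).fun_sub
      ((hasDerivAt_id s).smul_const (fderiv ℝ f x v))
  have bound_deriv (s : ℝ) : HasDerivAt (fun s : ℝ ↦ K / 2 * ‖v‖ ^ 2 * s ^ 2)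
      (K * ‖v‖ ^ 2 * s) s := by
    refine ((hasDerivAt_pow 2 s).const_mul _).congr_deriv ?_
    ring
  have deriv_le (s : ℝ) (hs : s ∈ Ico 0 1) :
      ‖fderiv ℝ f (x + s • v) v - fderiv ℝ f x v‖ ≤ K * ‖v‖ ^ 2 * s :=
    calc ‖(fderiv ℝ f (x + s • v) - fderiv ℝ f x) v‖
        ≤ ‖fderiv ℝ f (x + s • v) - fderiv ℝ f x‖ * ‖v‖ := ContinuousLinearMap.le_opNorm _ _
      _ ≤ K * ‖x + s • v - x‖ * ‖v‖ := by gcongr; exact hf'.norm_sub_le _ _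
      _ = K * ‖v‖ ^ 2 * s := by
        rw [add_sub_cancel_left, norm_smul, Real.norm_of_nonneg hs.1]
        ring
  simpa using image_norm_le_of_norm_deriv_right_le_deriv_boundary
    (fun s _ ↦ (remainder_deriv s).continuousAt.continuousWithinAt)
    (fun s _ ↦ (remainder_deriv s).hasDerivWithinAt) (by simp) bound_deriv deriv_le
    (right_mem_Icc.2 zero_le_one)

lemma abs_sub_inner_gradient_le_of_lipschitzWith_gradient {E : Type*}
    [NormedAddCommGroup E] [InnerProductSpace ℝ E] [CompleteSpace E]
    {Φ : E → ℝ} {K : ℝ≥0} (hΦ : Differentiable ℝ Φ) (hΦ' : LipschitzWith K (∇ Φ)) (x v : E) :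
    |Φ (x + v) - Φ x - ⟪∇ Φ x, v⟫| ≤ K / 2 * ‖v‖ ^ 2 := by
  have hfderiv : LipschitzWith K (fderiv ℝ Φ) := by
    rw [← toDual_comp_gradient]
    simpa using (InnerProductSpace.toDual ℝ E).lipschitz.comp hΦ'
  rw [inner_gradient_left]
  exact norm_sub_fderiv_le_of_lipschitzWith_fderiv hΦ hfderiv x v

section Probability

variable {Ω : Type*} {m m0 : MeasurableSpace Ω} {μ : Measure Ω}

lemma memLp_comp_of_lipschitzWith [IsFiniteMeasure μ] {E F : Type*}
    [NormedAddCommGroup E] [NormedAddCommGroup F] {p : ENNReal} {f : E → F} {K : ℝ≥0}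
    (hf : LipschitzWith K f) {X : Ω → E} (hX : MemLp X p μ) : MemLp (fun ω ↦ f (X ω)) p μ := by
  have hsub : LipschitzWith K fun x ↦ f x - f 0 := by
    simpa using hf.sub (LipschitzWith.const (f 0))
  simpa [Pi.add_def] using (hsub.comp_memLp (sub_self _) hX).add (memLp_const (f 0))

lemma integrable_inner_of_memLp_two {E : Type*} [NormedAddCommGroup E] [InnerProductSpace ℝ E]
    {X Y : Ω → E} (hX : MemLp X 2 μ) (hY : MemLp Y 2 μ) : Integrable (fun ω ↦ ⟪X ω, Y ω⟫) μ :=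
  (hX.norm.integrable_mul hY.norm).mono' (hX.1.inner hY.1)
    (.of_forall fun _ ↦ norm_inner_le_norm _ _)

lemma integrable_comp_of_lipschitzWith_gradient [IsFiniteMeasure μ] {E : Type*}
    [NormedAddCommGroup E] [InnerProductSpace ℝ E] [CompleteSpace E] {Φ : E → ℝ} {K : ℝ≥0}
    (hΦ : Differentiable ℝ Φ) (hΦ' : LipschitzWith K (∇ Φ)) {X : Ω → E} (hX : MemLp X 2 μ) :
    Integrable (fun ω ↦ Φ (X ω)) μ := by
  have hlinear : Integrable (fun ω ↦ Φ 0 + ⟪∇ Φ 0, X ω⟫) μ :=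
    (integrable_const _).add ((hX.integrable one_le_two).const_inner _)
  have hremainder : Integrable (fun ω ↦ Φ (X ω) - (Φ 0 + ⟪∇ Φ 0, X ω⟫)) μ := by
    refine ((hX.integrable_norm_pow two_ne_zero).const_mul (K / 2 : ℝ)).mono'
      ((hΦ.continuous.comp_aestronglyMeasurable hX.1).sub hlinear.1) (.of_forall fun ω ↦ ?_)
    simpa [sub_sub] using abs_sub_inner_gradient_le_of_lipschitzWith_gradient hΦ hΦ' 0 (X ω)
  simpa [Pi.add_def] using hremainder.add hlinear

lemma integral_bilin_eq_zero_of_condExp_eq_zero {E F G : Type*}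
    [NormedAddCommGroup E] [NormedSpace ℝ E] [CompleteSpace E]
    [NormedAddCommGroup F] [NormedSpace ℝ F]
    [NormedAddCommGroup G] [NormedSpace ℝ G] [CompleteSpace G]
    (B : F →L[ℝ] E →L[ℝ] G) (hm : m ≤ m0) [SigmaFinite (μ.trim hm)] {X : Ω → F} {Y : Ω → E}
    (hX : AEStronglyMeasurable[m] X μ) (hXY : Integrable (fun ω ↦ B (X ω) (Y ω)) μ)
    (hY : Integrable Y μ) (hY0 : μ[Y | m] =ᵐ[μ] 0) : ∫ ω, B (X ω) (Y ω) ∂μ = 0 := by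
  rw [← integral_condExp hm]
  refine integral_eq_zero_of_ae ?_
  filter_upwards [condExp_bilin_of_aestronglyMeasurable_left B hX hXY hY, hY0] with ω hω hω0
  simp [hω, hω0]

lemma integral_le_of_condExp_le_const [IsProbabilityMeasure μ] (hm : m ≤ m0) {f : Ω → ℝ} {c : ℝ}
    (hf : ∀ᵐ ω ∂μ, (μ[f | m]) ω ≤ c) : ∫ ω, f ω ∂μ ≤ c := by
  rw [← integral_condExp hm]
  simpa using integral_mono_ae integrable_condExp (integrable_const c) hf

lemma integral_sq_norm_le_of_ae_norm_le [IsProbabilityMeasure μ] {E : Type*}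
    [NormedAddCommGroup E] {X : Ω → E} {c : ℝ} (hX : ∀ᵐ ω ∂μ, ‖X ω‖ ≤ c) :
    ∫ ω, ‖X ω‖ ^ 2 ∂μ ≤ c ^ 2 := by
  have hsq : ∀ᵐ ω ∂μ, ‖‖X ω‖ ^ 2‖ ≤ c ^ 2 := by
    filter_upwards [hX] with ω hω
    rw [norm_pow, norm_norm]
    gcongr
  simpa using (le_abs_self _).trans (norm_integral_le_of_norm_le_const hsq)

end Probability

lemma average_range_le_of_le_sub_add {a f : ℕ → ℝ} {c : ℝ} {T : ℕ} (hT : T ≠ 0)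
    (h : ∀ t < T, a t ≤ f t - f (t + 1) + c) :
    (1 / T : ℝ) * ∑ t ∈ Finset.range T, a t ≤ (f 0 - f T) / T + c := by
  have hsum : ∑ t ∈ Finset.range T, a t ≤ f 0 - f T + T * c :=
    calc ∑ t ∈ Finset.range T, a t
        ≤ ∑ t ∈ Finset.range T, (f t - f (t + 1) + c) :=
          Finset.sum_le_sum fun t ht ↦ h t (Finset.mem_range.1 ht)
      _ = f 0 - f T + T * c := by
        rw [Finset.sum_add_distrib, Finset.sum_range_sub']
        simp
  calc (1 / T : ℝ) * ∑ t ∈ Finset.range T, a t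
      ≤ 1 / T * (f 0 - f T + T * c) := by gcongr
    _ = (f 0 - f T) / T + c := by field_simp

section BiasedSGD

variable {E : Type*} [NormedAddCommGroup E] [InnerProductSpace ℝ E] [CompleteSpace E]
  {Φ : E → ℝ} {Λ : ℝ≥0} {η : ℝ} {Ω : Type*} {m m0 : MeasurableSpace Ω} {P : Measure Ω}

lemma sq_norm_gradient_le_of_sgd_step (hΦ : Differentiable ℝ Φ) (hΦ' : LipschitzWith Λ (∇ Φ))
    (hη : 0 < η) (hηΛ : Λ * η ≤ 1) (x b ξ : E) :
    ‖∇ Φ x‖ ^ 2 ≤ 2 / η * (Φ x - Φ (x - η • (∇ Φ x + b + ξ))) + ‖b‖ ^ 2 + Λ * η * ‖ξ‖ ^ 2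
      + ⟪(2 * Λ * η) • (∇ Φ x + b) - (2 : ℝ) • ∇ Φ x, ξ⟫ := by
  set G := ∇ Φ x
  have descent : Φ (x - η • (G + b + ξ)) - Φ x ≤
      -(η * ⟪G, G + b + ξ⟫) + Λ / 2 * (η ^ 2 * ‖G + b + ξ‖ ^ 2) := by
    have taylor := (abs_le.1 (abs_sub_inner_gradient_le_of_lipschitzWith_gradient hΦ hΦ' x
      (-(η • (G + b + ξ))))).2
    rw [← sub_eq_add_neg, norm_neg, norm_smul, mul_pow, Real.norm_of_nonneg hη.le,
      inner_neg_right, real_inner_smul_right] at taylor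
    linarith
  have scaled : 2 * ⟪G, G + b + ξ⟫ ≤
      2 / η * (Φ x - Φ (x - η • (G + b + ξ))) + Λ * η * ‖G + b + ξ‖ ^ 2 := by
    have := mul_le_mul_of_nonneg_left descent (by positivity : 0 ≤ 2 / η)
    field_simp at this ⊢
    linarith
  have polarization : ‖G + b‖ ^ 2 - 2 * ⟪G, G + b⟫ = ‖b‖ ^ 2 - ‖G‖ ^ 2 := by
    rw [norm_add_sq_real, inner_add_right, real_inner_self_eq_norm_sq]
    ring
  have step_size : Λ * η * ‖G + b‖ ^ 2 ≤ ‖G + b‖ ^ 2 :=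
    mul_le_of_le_one_left (sq_nonneg _) hηΛ
  rw [norm_add_sq_real (G + b) ξ, inner_add_right G (G + b) ξ] at scaled
  rw [inner_sub_left, real_inner_smul_left, real_inner_smul_left]
  linarith

lemma integral_sq_norm_gradient_le_of_sgd_step [IsFiniteMeasure P] (hΦ : Differentiable ℝ Φ)
    (hΦ' : LipschitzWith Λ (∇ Φ)) (hη : 0 < η) (hηΛ : Λ * η ≤ 1) (hm : m ≤ m0)
    {x b ξ : Ω → E} (hx : MemLp x 2 P) (hb : MemLp b 2 P) (hξ : MemLp ξ 2 P)
    (hxm : AEStronglyMeasurable[m] x P) (hbm : AEStronglyMeasurable[m] b P)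
    (hξ0 : P[ξ | m] =ᵐ[P] 0) :
    ∫ ω, ‖∇ Φ (x ω)‖ ^ 2 ∂P ≤
      2 / η * (∫ ω, Φ (x ω) ∂P - ∫ ω, Φ (x ω - η • (∇ Φ (x ω) + b ω + ξ ω)) ∂P)
        + ∫ ω, ‖b ω‖ ^ 2 ∂P + Λ * η * ∫ ω, ‖ξ ω‖ ^ 2 ∂P := by
  have hG := memLp_comp_of_lipschitzWith hΦ' hx
  have hGm := hΦ'.continuous.comp_aestronglyMeasurable hxm
  let w : Ω → E := fun ω ↦ (2 * Λ * η) • (∇ Φ (x ω) + b ω) - (2 : ℝ) • ∇ Φ (x ω)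
  have hw : MemLp w 2 P := ((hG.add hb).const_smul (2 * Λ * η : ℝ)).sub (hG.const_smul (2 : ℝ))
  have hwm : AEStronglyMeasurable[m] w P :=
    ((hGm.add hbm).const_smul (2 * Λ * η : ℝ)).sub (hGm.const_smul (2 : ℝ))
  have hwξ := integrable_inner_of_memLp_two hw hξ
  have orthogonal : ∫ ω, ⟪w ω, ξ ω⟫ ∂P = 0 :=
    integral_bilin_eq_zero_of_condExp_eq_zero (innerSL ℝ) hm hwm hwξ
      (hξ.integrable one_le_two) hξ0
  have hΦx := integrable_comp_of_lipschitzWith_gradient hΦ hΦ' hx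
  have hΦx' : Integrable (fun ω ↦ Φ (x ω - η • (∇ Φ (x ω) + b ω + ξ ω))) P :=
    integrable_comp_of_lipschitzWith_gradient hΦ hΦ' (hx.sub (((hG.add hb).add hξ).const_smul η))
  have hb2 := hb.integrable_norm_pow two_ne_zero
  have hξ2 := hξ.integrable_norm_pow two_ne_zero
  have hdrop : Integrable
      (fun ω ↦ 2 / η * (Φ (x ω) - Φ (x ω - η • (∇ Φ (x ω) + b ω + ξ ω)))) P :=
    (hΦx.sub hΦx').const_mul _
  have hnoise := hξ2.const_mul (Λ * η)
  have hsum := (hdrop.fun_add hb2).fun_add hnoise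
  calc ∫ ω, ‖∇ Φ (x ω)‖ ^ 2 ∂P
      ≤ ∫ ω, 2 / η * (Φ (x ω) - Φ (x ω - η • (∇ Φ (x ω) + b ω + ξ ω))) + ‖b ω‖ ^ 2
          + Λ * η * ‖ξ ω‖ ^ 2 + ⟪w ω, ξ ω⟫ ∂P :=
        integral_mono (hG.integrable_norm_pow two_ne_zero)
          (hsum.add hwξ)
          fun ω ↦ sq_norm_gradient_le_of_sgd_step hΦ hΦ' hη hηΛ (x ω) (b ω) (ξ ω)
    _ = _ := by
        rw [integral_add hsum hwξ, integral_add (hdrop.fun_add hb2) hnoise,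
          integral_add hdrop hb2, integral_const_mul, integral_const_mul, integral_sub hΦx hΦx',
          orthogonal, add_zero]

lemma memLp_sgd_iterate [IsFiniteMeasure P] (hΦ' : LipschitzWith Λ (∇ Φ)) {p : ENNReal} {T : ℕ}
    {θ b ξ : ℕ → Ω → E} (hθ0 : MemLp (θ 0) p P)
    (hrec : ∀ t < T, ∀ ω, θ (t + 1) ω = θ t ω - η • (∇ Φ (θ t ω) + b t ω + ξ t ω))
    (hb : ∀ t < T, MemLp (b t) p P) (hξ : ∀ t < T, MemLp (ξ t) p P) :
    ∀ t ≤ T, MemLp (θ t) p P := by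
  intro t ht
  induction t with
  | zero => exact hθ0
  | succ t ih =>
    have hθ := ih (Nat.le_of_succ_le ht)
    rw [funext (hrec t ht)]
    exact hθ.sub
      ((((memLp_comp_of_lipschitzWith hΦ' hθ).add (hb t ht)).add (hξ t ht)).const_smul η)

theorem biased_sgd_stationarity_general [IsProbabilityMeasure P] (hΦ : Differentiable ℝ Φ)
    (hΦ' : LipschitzWith Λ (∇ Φ)) (hbdd : BddBelow (range Φ)) (hη : 0 < η) (hηΛ : Λ * η ≤ 1)
    {T : ℕ} (hT : T ≠ 0) {β V : ℝ} {ℱ : Filtration ℕ m0} {θ b ξ : ℕ → Ω → E}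
    (hθ0 : MemLp (θ 0) 2 P)
    (hrec : ∀ t < T, ∀ ω, θ (t + 1) ω = θ t ω - η • (∇ Φ (θ t ω) + b t ω + ξ t ω))
    (hθm : ∀ t < T, AEStronglyMeasurable[ℱ t] (θ t) P)
    (hbm : ∀ t < T, AEStronglyMeasurable[ℱ t] (b t) P)
    (hb : ∀ t < T, MemLp (b t) 2 P) (hbβ : ∀ t < T, ∫ ω, ‖b t ω‖ ^ 2 ∂P ≤ β)
    (hξ : ∀ t < T, MemLp (ξ t) 2 P) (hξV : ∀ t < T, ∫ ω, ‖ξ t ω‖ ^ 2 ∂P ≤ V)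
    (hξ0 : ∀ t < T, P[ξ t | ℱ t] =ᵐ[P] 0) :
    (1 / T : ℝ) * ∑ t ∈ Finset.range T, ∫ ω, ‖∇ Φ (θ t ω)‖ ^ 2 ∂P ≤
      2 * (∫ ω, Φ (θ 0 ω) ∂P - ⨅ x, Φ x) / (η * T) + Λ * η * V + β := by
  have hθ := memLp_sgd_iterate hΦ' hθ0 hrec hb hξ
  have decrease (t : ℕ) (ht : t < T) : ∫ ω, ‖∇ Φ (θ t ω)‖ ^ 2 ∂P ≤
      2 / η * ∫ ω, Φ (θ t ω) ∂P - 2 / η * ∫ ω, Φ (θ (t + 1) ω) ∂P + (Λ * η * V + β) := by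
    have step := integral_sq_norm_gradient_le_of_sgd_step hΦ hΦ' hη hηΛ (ℱ.le t)
      (hθ t ht.le) (hb t ht) (hξ t ht) (hθm t ht) (hbm t ht) (hξ0 t ht)
    simp only [← hrec t ht] at step
    have noise : Λ * η * ∫ ω, ‖ξ t ω‖ ^ 2 ∂P ≤ Λ * η * V := by gcongr; exact hξV t ht
    linarith [hbβ t ht]
  have lower : ⨅ x, Φ x ≤ ∫ ω, Φ (θ T ω) ∂P := by
    simpa using integral_mono (integrable_const _)
      (integrable_comp_of_lipschitzWith_gradient hΦ hΦ' (hθ T le_rfl)) fun ω ↦ ciInf_le hbdd _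
  calc (1 / T : ℝ) * ∑ t ∈ Finset.range T, ∫ ω, ‖∇ Φ (θ t ω)‖ ^ 2 ∂P
      ≤ (2 / η * ∫ ω, Φ (θ 0 ω) ∂P - 2 / η * ∫ ω, Φ (θ T ω) ∂P) / T + (Λ * η * V + β) :=
        average_range_le_of_le_sub_add hT decrease
    _ = 2 * (∫ ω, Φ (θ 0 ω) ∂P - ∫ ω, Φ (θ T ω) ∂P) / (η * T) + Λ * η * V + β := by
        field_simp
        ring
    _ ≤ 2 * (∫ ω, Φ (θ 0 ω) ∂P - ⨅ x, Φ x) / (η * T) + Λ * η * V + β := by gcongr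

end BiasedSGD

/-- Stationarity for biased SGD: if `Φ` is differentiable with `Λ`-Lipschitz gradient and
bounded below, `0 < η ≤ 1/(4Λ)`, and the iterates satisfy `θ^{t+1} = θ^t − η g^t` with
`g^t = ∇Φ(θ^t) + b^t + ξ^t`, `θ^t, b^t` being `F_t`-measurable, `‖b^t‖ ≤ Δ/2` a.s.,
`E[ξ^t | F_t] = 0` and `E[‖ξ^t‖² | F_t] ≤ σ² + ζ²/4`, then
`(1/T) ∑_{t<T} E[‖∇Φ(θ^t)‖²] ≤ 4(Φ(θ⁰) − Φ*)/(ηT) + 2Λη(σ² + ζ²/4) + (3/4)Δ²`. -/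
theorem biased_sgd_stationarity {d : ℕ}
    (Φ : EuclideanSpace ℝ (Fin d) → ℝ) (hdiff : Differentiable ℝ Φ)
    (Λ : ℝ) (hΛ : 0 < Λ)
    (hlip : ∀ x y, ‖gradient Φ x - gradient Φ y‖ ≤ Λ * ‖x - y‖)
    (hbdd : BddBelow (Set.range Φ))
    (η : ℝ) (hη : 0 < η) (hη' : η ≤ 1 / (4 * Λ))
    {T : ℕ} (hT : 1 ≤ T)
    (Δ σ ζ : ℝ) (hΔ : 0 ≤ Δ) (hσ : 0 ≤ σ) (hζ : 0 ≤ ζ)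
    {Ω : Type*} {m0 : MeasurableSpace Ω} (P : Measure Ω) [IsProbabilityMeasure P]
    (ℱ : Filtration ℕ m0)
    (θ0 : EuclideanSpace ℝ (Fin d))
    (θ b ξ g : ℕ → Ω → EuclideanSpace ℝ (Fin d))
    (hθ0 : ∀ ω, θ 0 ω = θ0)
    (hg : ∀ t < T, ∀ ω, g t ω = gradient Φ (θ t ω) + b t ω + ξ t ω)
    (hrec : ∀ t < T, ∀ ω, θ (t + 1) ω = θ t ω - η • g t ω)
    (hθmeas : ∀ t < T, Measurable[ℱ t] (θ t))
    (hbmeas : ∀ t < T, Measurable[ℱ t] (b t))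
    (hbbdd : ∀ t < T, ∀ᵐ ω ∂P, ‖b t ω‖ ≤ Δ / 2)
    (hξint : ∀ t < T, Integrable (ξ t) P)
    (hξsqint : ∀ t < T, Integrable (fun ω => ‖ξ t ω‖ ^ 2) P)
    (hξcond : ∀ t < T, P[ξ t|ℱ t] =ᵐ[P] 0)
    (hξcondvar : ∀ t < T,
      ∀ᵐ ω ∂P, (P[fun ω' => ‖ξ t ω'‖ ^ 2|ℱ t]) ω ≤ σ ^ 2 + ζ ^ 2 / 4) :
    (1 / T : ℝ) * ∑ t ∈ Finset.range T, ∫ ω, ‖gradient Φ (θ t ω)‖ ^ 2 ∂P ≤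
      4 * (Φ θ0 - ⨅ x, Φ x) / (η * T)
        + 2 * Λ * η * (σ ^ 2 + ζ ^ 2 / 4)
        + (3 / 4) * Δ ^ 2 := by
  lift Λ to ℝ≥0 using hΛ.le
  have hηΛ : Λ * η ≤ 1 := by
    rw [le_div_iff₀ (by positivity)] at hη'
    linarith [mul_pos hΛ hη]
  have sharp := biased_sgd_stationarity_general hdiff (lipschitzWith_iff_norm_sub_le.2 hlip) hbdd
    hη hηΛ (Nat.one_le_iff_ne_zero.1 hT) (funext hθ0 ▸ memLp_const θ0)
    (fun t ht ω ↦ by rw [hrec t ht, hg t ht])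
    (fun t ht ↦ (hθmeas t ht).aestronglyMeasurable)
    (fun t ht ↦ (hbmeas t ht).aestronglyMeasurable)
    (fun t ht ↦ .of_bound ((hbmeas t ht).mono (ℱ.le t) le_rfl).aestronglyMeasurable _ (hbbdd t ht))
    (fun t ht ↦ integral_sq_norm_le_of_ae_norm_le (hbbdd t ht))
    (fun t ht ↦ (memLp_two_iff_integrable_sq_norm (hξint t ht).1).2 (hξsqint t ht))
    (fun t ht ↦ integral_le_of_condExp_le_const (ℱ.le t) (hξcondvar t ht)) hξcond
  have hgap : 0 ≤ (Φ θ0 - ⨅ x, Φ x) / (η * T) :=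
    div_nonneg (sub_nonneg.2 (ciInf_le hbdd θ0)) (by positivity)
  have hnoise : 0 ≤ Λ * η * (σ ^ 2 + ζ ^ 2 / 4) := by positivity
  simp only [hθ0, integral_const, probReal_univ, one_smul] at sharp
  rw [mul_div_assoc] at sharp ⊢
  linarith [sq_nonneg Δ]
end

section
/- Let μ₁ and μ₁' be probability measures on a measurable space Ω₁, let κ and κ' be Markov kernels from Ω₁ to a measurable space Ω₂, and let ε₁, ε₂, δ₁, δ₂ ≥ 0. Suppose (i) for every measurable set S ⊆ Ω₁, μ₁(S) ≤ e^{ε₁} · μ₁'(S) + δ₁, and (ii) for every ω ∈ Ω₁ and every measurable set S ⊆ Ω₂, κ(ω)(S) ≤ e^{ε₂} · κ'(ω)(S) + δ₂. Then the composed measures on Ω₁ × Ω₂ satisfy, for every measurable set S ⊆ Ω₁ × Ω₂, (μ₁ ⊗ κ)(S) ≤ e^{ε₁ + ε₂} · (μ₁' ⊗ κ')(S) + δ₁ + δ₂, where μ ⊗ κ denotes the measure A ↦ ∫_{Ω₁} κ(ω)({ω₂ : (ω, ω₂) ∈ A}) dμ(ω). -/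
open MeasureTheory ProbabilityTheory

/-!
Slice `S` along `ω`. The slice masses `κ ω (S_ω)` are at most both `c₂ * κ' ω (S_ω) + δ₂` and
`B = sup_ω κ ω Ω₂`, hence at most `f ω + δ₂` where `f ω = min B (c₂ * κ' ω (S_ω))`.
The truncation is what keeps the additive error under control when passing from `μ` to `μ'`: by the
layer cake formula `∫ f dμ` is an integral of `μ {f > t}` over `0 < t < B`, so the error `δ₁` is
paid on an interval of length `B` only.
-/

section ApproxDominated

open Set
open scoped ENNReal

variable {α β : Type*} [MeasurableSpace α] [MeasurableSpace β]

/-- The one-sided `(ε, δ)`-indistinguishability of differential privacy, for arbitrary measures and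
with the factor `c` in place of `e ^ ε`. The values `c = ∞` and `δ = ∞` are allowed. -/
def ApproxDominated (c δ : ℝ≥0∞) (μ ν : Measure α) : Prop :=
  ∀ S : Set α, MeasurableSet S → μ S ≤ c * ν S + δ

lemma lintegral_eq_setLIntegral_Ioo_meas_lt {μ : Measure α} {f : α → ℝ≥0∞} {b : ℝ≥0∞}
    (hf : AEMeasurable f μ) (hb : b ≠ ∞) (hfb : ∀ᵐ x ∂μ, f x ≤ b) :
    ∫⁻ x, f x ∂μ = ∫⁻ t in Ioo 0 b.toReal, μ {x | ENNReal.ofReal t < f x} := by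
  have hf_top : ∀ᵐ x ∂μ, f x ≠ ∞ := hfb.mono fun x hx ↦ ne_top_of_le_ne_top hb hx
  have tail_toReal : ∀ t ∈ Ioi (0 : ℝ),
      μ {x | t < (f x).toReal} = μ {x | ENNReal.ofReal t < f x} := fun t ht ↦
    measure_congr <| hf_top.mono fun x hx ↦
      propext (ENNReal.ofReal_lt_iff_lt_toReal (le_of_lt ht) hx).symm
  have tail_support : (fun t : ℝ ↦ μ {x | ENNReal.ofReal t < f x}).support ⊆ Iio b.toReal := by
    refine Function.support_subset_iff'.2 fun t ht ↦ measure_eq_zero_iff_ae_notMem.2 ?_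
    have hbt : b ≤ ENNReal.ofReal t :=
      (ENNReal.ofReal_toReal hb).ge.trans (ENNReal.ofReal_le_ofReal (not_lt.1 ht))
    exact hfb.mono fun x hx ↦ not_lt.2 (hx.trans hbt)
  calc ∫⁻ x, f x ∂μ
      = ∫⁻ x, ENNReal.ofReal (f x).toReal ∂μ :=
        lintegral_congr_ae <| hf_top.mono fun x hx ↦ (ENNReal.ofReal_toReal hx).symm
    _ = ∫⁻ t in Ioi 0, μ {x | t < (f x).toReal} :=
        lintegral_eq_lintegral_meas_lt μ (ae_of_all _ fun _ ↦ ENNReal.toReal_nonneg)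
          hf.ennreal_toReal
    _ = ∫⁻ t in Ioi 0, μ {x | ENNReal.ofReal t < f x} :=
        setLIntegral_congr_fun measurableSet_Ioi tail_toReal
    _ = ∫⁻ t in Ioo 0 b.toReal, μ {x | ENNReal.ofReal t < f x} := by
        rw [← setLIntegral_eq_of_support_subset tail_support,
          Measure.restrict_restrict measurableSet_Iio, Iio_inter_Ioi]

lemma ApproxDominated.lintegral_le {c δ b : ℝ≥0∞} {μ ν : Measure α} {f : α → ℝ≥0∞}
    (h : ApproxDominated c δ μ ν) (hf : Measurable f) (hb : b ≠ ∞) (hfb : ∀ x, f x ≤ b) :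
    ∫⁻ x, f x ∂μ ≤ c * ∫⁻ x, f x ∂ν + δ * b := by
  have tail_measurable : Measurable fun t : ℝ ↦ ν {x | ENNReal.ofReal t < f x} :=
    Antitone.measurable fun _ _ hst ↦
      measure_mono fun _ hx ↦ (ENNReal.ofReal_le_ofReal hst).trans_lt hx
  calc ∫⁻ x, f x ∂μ
      = ∫⁻ t in Ioo 0 b.toReal, μ {x | ENNReal.ofReal t < f x} :=
        lintegral_eq_setLIntegral_Ioo_meas_lt hf.aemeasurable hb (ae_of_all _ hfb)
    _ ≤ ∫⁻ t in Ioo 0 b.toReal, (c * ν {x | ENNReal.ofReal t < f x} + δ) :=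
        lintegral_mono fun _ ↦ h _ (measurableSet_lt measurable_const hf)
    _ = c * (∫⁻ t in Ioo 0 b.toReal, ν {x | ENNReal.ofReal t < f x}) + δ * b := by
        rw [lintegral_add_right _ measurable_const, lintegral_const_mul _ tail_measurable,
          setLIntegral_const, Real.volume_Ioo, sub_zero, ENNReal.ofReal_toReal hb]
    _ = c * ∫⁻ x, f x ∂ν + δ * b := by
        rw [← lintegral_eq_setLIntegral_Ioo_meas_lt hf.aemeasurable hb (ae_of_all _ hfb)]

theorem dp_adaptive_composition_general {c₁ c₂ δ₁ δ₂ : ℝ≥0∞} {μ μ' : Measure α}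
    {κ κ' : Kernel α β} [SFinite μ] [SFinite μ'] [IsFiniteKernel κ] [IsSFiniteKernel κ']
    (hμ : ApproxDominated c₁ δ₁ μ μ') (hκ : ∀ᵐ a ∂μ, ApproxDominated c₂ δ₂ (κ a) (κ' a)) :
    ApproxDominated (c₁ * c₂) (δ₁ * κ.bound + δ₂ * μ univ) (μ ⊗ₘ κ) (μ' ⊗ₘ κ') := by
  intro S hS
  have slice_measurable : Measurable fun a ↦ κ' a (Prod.mk a ⁻¹' S) :=
    Kernel.measurable_kernel_prodMk_left hS
  let f : α → ℝ≥0∞ := fun a ↦ min κ.bound (c₂ * κ' a (Prod.mk a ⁻¹' S))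
  have hf : Measurable f := measurable_const.min (slice_measurable.const_mul c₂)
  have slice_le : ∀ᵐ a ∂μ, κ a (Prod.mk a ⁻¹' S) ≤ f a + δ₂ := by
    filter_upwards [hκ] with a ha
    rw [← min_add_add_right]
    exact le_min ((κ.measure_le_bound a _).trans le_self_add) (ha _ (measurable_prodMk_left hS))
  calc (μ ⊗ₘ κ) S
      = ∫⁻ a, κ a (Prod.mk a ⁻¹' S) ∂μ := Measure.compProd_apply hS
    _ ≤ ∫⁻ a, (f a + δ₂) ∂μ := lintegral_mono_ae slice_le
    _ = ∫⁻ a, f a ∂μ + δ₂ * μ univ := by rw [lintegral_add_left hf, lintegral_const]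
    _ ≤ c₁ * ∫⁻ a, f a ∂μ' + δ₁ * κ.bound + δ₂ * μ univ := by
        gcongr
        exact hμ.lintegral_le hf κ.bound_ne_top fun _ ↦ min_le_left _ _
    _ ≤ c₁ * ∫⁻ a, c₂ * κ' a (Prod.mk a ⁻¹' S) ∂μ' + δ₁ * κ.bound + δ₂ * μ univ := by
        gcongr with a
        exact min_le_right _ _
    _ = c₁ * c₂ * (μ' ⊗ₘ κ') S + (δ₁ * κ.bound + δ₂ * μ univ) := by
        rw [lintegral_const_mul _ slice_measurable, Measure.compProd_apply hS, mul_assoc,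
          add_assoc]

end ApproxDominated

/-- Adaptive composition of differential privacy: if `μ₁(S) ≤ e^{ε₁} μ₁'(S) + δ₁` for all
measurable `S ⊆ Ω₁`, and the Markov kernels satisfy `κ(ω)(S) ≤ e^{ε₂} κ'(ω)(S) + δ₂` for
every `ω` and measurable `S ⊆ Ω₂`, then the composed measures on `Ω₁ × Ω₂` satisfy
`(μ₁ ⊗ κ)(S) ≤ e^{ε₁ + ε₂} (μ₁' ⊗ κ')(S) + δ₁ + δ₂` for all measurable `S`. -/
theorem dp_adaptive_composition {Ω₁ Ω₂ : Type*} [MeasurableSpace Ω₁] [MeasurableSpace Ω₂]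
    (μ₁ μ₁' : Measure Ω₁) [IsProbabilityMeasure μ₁] [IsProbabilityMeasure μ₁']
    (κ κ' : Kernel Ω₁ Ω₂) [IsMarkovKernel κ] [IsMarkovKernel κ']
    (ε₁ ε₂ δ₁ δ₂ : ℝ) (hε₁ : 0 ≤ ε₁) (hε₂ : 0 ≤ ε₂) (hδ₁ : 0 ≤ δ₁) (hδ₂ : 0 ≤ δ₂)
    (hdp₁ : ∀ S : Set Ω₁, MeasurableSet S →
      μ₁ S ≤ ENNReal.ofReal (Real.exp ε₁) * μ₁' S + ENNReal.ofReal δ₁)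
    (hdp₂ : ∀ ω : Ω₁, ∀ S : Set Ω₂, MeasurableSet S →
      κ ω S ≤ ENNReal.ofReal (Real.exp ε₂) * κ' ω S + ENNReal.ofReal δ₂) :
    ∀ S : Set (Ω₁ × Ω₂), MeasurableSet S →
      (μ₁.compProd κ) S ≤
        ENNReal.ofReal (Real.exp (ε₁ + ε₂)) * (μ₁'.compProd κ') S +
          ENNReal.ofReal (δ₁ + δ₂) := by
  have := nonempty_of_isProbabilityMeasure μ₁
  simpa [ApproxDominated, Real.exp_add, ENNReal.ofReal_mul, Real.exp_nonneg, ENNReal.ofReal_add,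
    hδ₁, hδ₂] using dp_adaptive_composition_general hdp₁ (ae_of_all μ₁ hdp₂)
end
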